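/- Theorem 4.2 (explicit form): in the setting of a minimal Lorentzian surface x(s,t) = α(s) + β(t) in null coordinates with I₁ × I₂ connected, suppose there exists a smooth function f : I₁ × I₂ → ℝ such that Δ(Δν) = f·Δν at every point, where Δξ := (2/m²)·∂²ξ/∂s∂t for Λ²(ℝ⁴)-valued maps ξ. Then: η₁ ∧ η₂ vanishes identically, the function K := B(η₁,η₂)/m⁴ is constant on I₁ × I₂, and Δν = 2K·ν everywhere. In particular f may be taken to be the constant 2K on the set where Δν ≠ 0, and the Gauss map ν is of 1-type (an eigenvector of Δ). -/

import Mathlib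

noncomputable section

/-- The Minkowski bilinear form on `ℝ⁴ = Fin 4 → ℝ`:
`B(v,w) = -v₀w₀ + v₁w₁ + v₂w₂ + v₃w₃`. -/
def B4 (v w : Fin 4 → ℝ) : ℝ :=
  -(v 0 * w 0) + v 1 * w 1 + v 2 * w 2 + v 3 * w 3

/-- The wedge product `v ∧ w`, modelled concretely as the antisymmetric array
`(i,j) ↦ vᵢwⱼ - vⱼwᵢ` (a faithful model of the second exterior power `Λ²(ℝ⁴)`). -/
def wedge (v w : Fin 4 → ℝ) : Fin 4 → Fin 4 → ℝ :=
  fun i j => v i * w j - v j * w i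

/-- Partial derivative of a two-parameter map with respect to the first variable. -/
def pds {E : Type*} [NormedAddCommGroup E] [NormedSpace ℝ E]
    (x : ℝ → ℝ → E) (s t : ℝ) : E :=
  deriv (fun u => x u t) s

/-- Partial derivative of a two-parameter map with respect to the second variable. -/
def pdt {E : Type*} [NormedAddCommGroup E] [NormedSpace ℝ E]
    (x : ℝ → ℝ → E) (s t : ℝ) : E :=
  deriv (fun u => x s u) t

/-- `m²(s,t) = -B(α'(s), β'(t))`, the conformal factor of the induced metric
`-m²(ds⊗dt + dt⊗ds)` of the minimal Lorentzian surface `x(s,t) = α(s) + β(t)`. -/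
def msq (α β : ℝ → Fin 4 → ℝ) (s t : ℝ) : ℝ :=
  -B4 (deriv α s) (deriv β t)

/-- `η₁ = h(∂s,∂s)`: the component of `x_{ss} = α''` orthogonal to the tangent
plane `span{α'(s), β'(t)}`. -/
def eta1 (α β : ℝ → Fin 4 → ℝ) (s t : ℝ) : Fin 4 → ℝ :=
  deriv (deriv α) s
    - (B4 (deriv (deriv α) s) (deriv β t) / B4 (deriv α s) (deriv β t)) • deriv α s

/-- `η₂ = h(∂t,∂t)`: the component of `x_{tt} = β''` orthogonal to the tangent
plane `span{α'(s), β'(t)}`. -/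
def eta2 (α β : ℝ → Fin 4 → ℝ) (s t : ℝ) : Fin 4 → ℝ :=
  deriv (deriv β) t
    - (B4 (deriv (deriv β) t) (deriv α s) / B4 (deriv α s) (deriv β t)) • deriv β t

/-- The Gauss map `ν = (1/m²)·(α'(s) ∧ β'(t))`, valued in (a model of) `Λ²(ℝ⁴)`. -/
def gaussMap (α β : ℝ → Fin 4 → ℝ) (s t : ℝ) : Fin 4 → Fin 4 → ℝ :=
  (1 / msq α β s t) • wedge (deriv α s) (deriv β t)

/-- The Laplace–Beltrami operator of the induced metric `-m²(ds⊗dt + dt⊗ds)`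
(with the sign convention of the paper) acting on `Λ²(ℝ⁴)`-valued maps:
`Δξ = (2/m²)·∂²ξ/∂s∂t`. -/
def lap (α β : ℝ → Fin 4 → ℝ) (ξ : ℝ → ℝ → (Fin 4 → Fin 4 → ℝ)) (s t : ℝ) :
    Fin 4 → Fin 4 → ℝ :=
  (2 / msq α β s t) • pds (pdt ξ) s t

/-! The Minkowski form and the Hodge star turn `Λ²(ℝ⁴)` into `ℂ³` with its bilinear dot product,
and the Gauss map into a map `N` with `N ⬝ N = 1`, whose partial derivatives `Nₛ`, `Nₜ` are null
because `η₁ ⊥ β'` and `η₂ ⊥ α'`. As `η₁` and `η₂` are orthogonal to the tangent plane, `η₁ ∧ η₂` is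
a multiple of the Hodge dual of `ν`, so `ΔN = G N` with `G = 2(K + iκ)`.

The hypothesis reads `Δ(G N) = f G N`. Its part tangent to the quadric `N ⬝ N = 1` is
`Gₛ Nₜ + Gₜ Nₛ = 0`; dotting with `Nₛ` and `Nₜ`, where `Nₛ ⬝ Nₜ = -N ⬝ Nₛₜ = -m² G / 2`, gives
`G Gₛ = G Gₜ = 0`, so `G` is constant. Then `G² = f G`, so `G` is `0` or the real number `f`. Hence
`κ = 0`, which is the vanishing of `η₁ ∧ η₂`, and `K` is constant. -/

open Filter Function Matrix
open scoped Topology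

section PartialDerivatives

variable {E F : Type*} [NormedAddCommGroup E] [NormedSpace ℝ E] [NormedAddCommGroup F]
  [NormedSpace ℝ F] {U V : Set ℝ} {x y : ℝ → ℝ → E} {s t : ℝ} {m n : WithTop ℕ∞}

theorem pds_pdt_congr (hU : IsOpen U) (hV : IsOpen V)
    (hxy : ∀ s ∈ U, ∀ t ∈ V, x s t = y s t) (hs : s ∈ U) (ht : t ∈ V) :
    pds (pdt x) s t = pds (pdt y) s t := by
  have hpdt : ∀ u ∈ U, pdt x u t = pdt y u t := fun u hu =>
    EventuallyEq.deriv_eq <| (hV.eventually_mem ht).mono (hxy u hu)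
  exact EventuallyEq.deriv_eq <| (hU.eventually_mem hs).mono hpdt

theorem hasDerivAt_fst_of_differentiableAt (hx : DifferentiableAt ℝ (uncurry x) (s, t)) :
    HasDerivAt (fun u => x u t) (fderiv ℝ (uncurry x) (s, t) (1, 0)) s :=
  HasFDerivAt.comp_hasDerivAt (f := fun u => (u, t)) s hx.hasFDerivAt
    ((hasDerivAt_id s).prodMk (hasDerivAt_const s t))

theorem hasDerivAt_snd_of_differentiableAt (hx : DifferentiableAt ℝ (uncurry x) (s, t)) :
    HasDerivAt (fun u => x s u) (fderiv ℝ (uncurry x) (s, t) (0, 1)) t :=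
  HasFDerivAt.comp_hasDerivAt (f := fun u => (s, u)) t hx.hasFDerivAt
    ((hasDerivAt_const t s).prodMk (hasDerivAt_id t))

theorem differentiableAt_uncurry (hU : IsOpen U) (hV : IsOpen V)
    (hx : ContDiffOn ℝ n (uncurry x) (U ×ˢ V)) (hn : n ≠ 0) (hs : s ∈ U) (ht : t ∈ V) :
    DifferentiableAt ℝ (uncurry x) (s, t) :=
  (hx.contDiffAt ((hU.prod hV).mem_nhds ⟨hs, ht⟩)).differentiableAt hn

theorem hasDerivAt_pds (hU : IsOpen U) (hV : IsOpen V)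
    (hx : ContDiffOn ℝ n (uncurry x) (U ×ˢ V)) (hn : n ≠ 0) (hs : s ∈ U) (ht : t ∈ V) :
    HasDerivAt (fun u => x u t) (pds x s t) s :=
  (hasDerivAt_fst_of_differentiableAt
    (differentiableAt_uncurry hU hV hx hn hs ht)).differentiableAt.hasDerivAt

theorem hasDerivAt_pdt (hU : IsOpen U) (hV : IsOpen V)
    (hx : ContDiffOn ℝ n (uncurry x) (U ×ˢ V)) (hn : n ≠ 0) (hs : s ∈ U) (ht : t ∈ V) :
    HasDerivAt (fun u => x s u) (pdt x s t) t :=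
  (hasDerivAt_snd_of_differentiableAt
    (differentiableAt_uncurry hU hV hx hn hs ht)).differentiableAt.hasDerivAt

theorem contDiffOn_pdt (hU : IsOpen U) (hV : IsOpen V)
    (hx : ContDiffOn ℝ n (uncurry x) (U ×ˢ V)) (hmn : m + 1 ≤ n) :
    ContDiffOn ℝ m (uncurry (pdt x)) (U ×ˢ V) := by
  have hn : n ≠ 0 := fun h => by simp [h] at hmn
  refine ((hx.fderiv_of_isOpen (hU.prod hV) hmn).clm_apply
    (contDiffOn_const (c := ((0, 1) : ℝ × ℝ)))).congr fun z hz => ?_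
  exact (hasDerivAt_snd_of_differentiableAt
    (differentiableAt_uncurry hU hV hx hn hz.1 hz.2)).deriv

theorem pds_pdt_clm_comp (hU : IsOpen U) (hV : IsOpen V) (L : E →L[ℝ] F)
    (hx : ContDiffOn ℝ 2 (uncurry x) (U ×ˢ V)) (hs : s ∈ U) (ht : t ∈ V) :
    pds (pdt fun s t => L (x s t)) s t = L (pds (pdt x) s t) := by
  have hpdt : ∀ u ∈ U, pdt (fun s t => L (x s t)) u t = L (pdt x u t) := fun u hu =>
    (L.hasFDerivAt.comp_hasDerivAt t (hasDerivAt_pdt hU hV hx two_ne_zero hu ht)).deriv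
  have hpdt_smooth : ContDiffOn ℝ 1 (uncurry (pdt x)) (U ×ˢ V) :=
    contDiffOn_pdt hU hV hx one_add_one_eq_two.le
  calc pds (pdt fun s t => L (x s t)) s t
      = pds (fun s t => L (pdt x s t)) s t :=
        EventuallyEq.deriv_eq <| (hU.eventually_mem hs).mono hpdt
    _ = L (pds (pdt x) s t) :=
        (L.hasFDerivAt.comp_hasDerivAt s
          (hasDerivAt_pds hU hV hpdt_smooth one_ne_zero hs ht)).deriv

theorem pds_pdt_smul {𝕜 : Type*} [NontriviallyNormedField 𝕜] [NormedAlgebra ℝ 𝕜]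
    [NormedSpace 𝕜 E] [IsScalarTower ℝ 𝕜 E] {G : ℝ → ℝ → 𝕜} (hU : IsOpen U) (hV : IsOpen V)
    (hG : ContDiffOn ℝ 2 (uncurry G) (U ×ˢ V)) (hx : ContDiffOn ℝ 2 (uncurry x) (U ×ˢ V))
    (hs : s ∈ U) (ht : t ∈ V) :
    pds (pdt fun s t => G s t • x s t) s t =
      G s t • pds (pdt x) s t + pds G s t • pdt x s t +
        (pdt G s t • pds x s t + pds (pdt G) s t • x s t) := by
  have hpdt : ∀ u ∈ U, pdt (fun s t => G s t • x s t) u t =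
      G u t • pdt x u t + pdt G u t • x u t := fun u hu =>
    ((hasDerivAt_pdt hU hV hG two_ne_zero hu ht).smul
      (hasDerivAt_pdt hU hV hx two_ne_zero hu ht)).deriv
  have hG' : ContDiffOn ℝ 1 (uncurry (pdt G)) (U ×ˢ V) :=
    contDiffOn_pdt hU hV hG one_add_one_eq_two.le
  have hx' : ContDiffOn ℝ 1 (uncurry (pdt x)) (U ×ˢ V) :=
    contDiffOn_pdt hU hV hx one_add_one_eq_two.le
  calc pds (pdt fun s t => G s t • x s t) s t
      = pds (fun s t => G s t • pdt x s t + pdt G s t • x s t) s t :=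
        EventuallyEq.deriv_eq <| (hU.eventually_mem hs).mono hpdt
    _ = _ :=
        (((hasDerivAt_pds hU hV hG two_ne_zero hs ht).smul
          (hasDerivAt_pds hU hV hx' one_ne_zero hs ht)).add
        ((hasDerivAt_pds hU hV hG' one_ne_zero hs ht).smul
          (hasDerivAt_pds hU hV hx two_ne_zero hs ht))).deriv

end PartialDerivatives

section Constancy

variable {𝕜 : Type*} [NormedField 𝕜] [NormedAlgebra ℝ 𝕜] {U V : Set ℝ}

theorem eq_of_mul_deriv_eq_zero {g : ℝ → 𝕜} (hU : IsOpen U) (hU' : IsPreconnected U)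
    (hg : DifferentiableOn ℝ g U) (hg' : ∀ x ∈ U, g x * deriv g x = 0) {x y : ℝ} (hx : x ∈ U)
    (hy : y ∈ U) : g x = g y := by
  have hdiff : ∀ u ∈ U, DifferentiableAt ℝ g u := fun u hu => hg.differentiableAt (hU.mem_nhds hu)
  have hsq : ∀ u ∈ U, ∀ v ∈ U, g u * g u = g v * g v := fun u hu v hv =>
    hU.is_const_of_deriv_eq_zero (f := g * g) hU' (hg.mul hg)
      (fun w hw => by
        rw [deriv_mul (hdiff w hw) (hdiff w hw), mul_comm, hg' w hw, add_zero, Pi.zero_apply])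
      hu hv
  by_cases hzero : ∃ u ∈ U, g u = 0
  · obtain ⟨u, hu, hgu⟩ := hzero
    have hvanish : ∀ v ∈ U, g v = 0 := fun v hv =>
      mul_self_eq_zero.1 ((hsq v hv u hu).trans (by rw [hgu, zero_mul]))
    rw [hvanish x hx, hvanish y hy]
  · push Not at hzero
    exact hU.is_const_of_deriv_eq_zero hU' hg
      (fun u hu => (mul_eq_zero.1 (hg' u hu)).resolve_left (hzero u hu)) hx hy

theorem exists_eq_of_mul_pds_mul_pdt_eq_zero {G : ℝ → ℝ → 𝕜} (hU : IsOpen U) (hV : IsOpen V)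
    (hU' : IsPreconnected U) (hV' : IsPreconnected V)
    (hG : ContDiffOn ℝ 1 (uncurry G) (U ×ˢ V))
    (hGs : ∀ s ∈ U, ∀ t ∈ V, G s t * pds G s t = 0)
    (hGt : ∀ s ∈ U, ∀ t ∈ V, G s t * pdt G s t = 0) :
    ∃ c, ∀ s ∈ U, ∀ t ∈ V, G s t = c := by
  obtain hempty | ⟨⟨s₀, t₀⟩, hs₀, ht₀⟩ := (U ×ˢ V).eq_empty_or_nonempty
  · exact ⟨0, fun s hs t ht => (hempty.le (Set.mk_mem_prod hs ht)).elim⟩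
  refine ⟨G s₀ t₀, fun s hs t ht => ?_⟩
  calc G s t = G s₀ t := eq_of_mul_deriv_eq_zero hU hU'
        (fun u hu => (hasDerivAt_pds hU hV hG one_ne_zero hu
          ht).differentiableAt.differentiableWithinAt)
        (fun u hu => hGs u hu t ht) hs hs₀
    _ = G s₀ t₀ := eq_of_mul_deriv_eq_zero hV hV'
        (fun u hu => (hasDerivAt_pdt hU hV hG one_ne_zero hs₀
          hu).differentiableAt.differentiableWithinAt)
        (fun u hu => hGt s₀ hs₀ u hu) ht ht₀

end Constancy

section NullQuadricMap

variable {𝕜 ι : Type*} [RCLike 𝕜] [Fintype ι]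

theorem contDiffOn_dotProduct {X : Type*} [NormedAddCommGroup X] [NormedSpace ℝ X] {S : Set X}
    {n : WithTop ℕ∞} {v w : X → ι → 𝕜} (hv : ContDiffOn ℝ n v S) (hw : ContDiffOn ℝ n w S) :
    ContDiffOn ℝ n (fun x => v x ⬝ᵥ w x) S := by
  unfold dotProduct; fun_prop

theorem hasDerivAt_dotProduct {v w : ℝ → ι → 𝕜} {v' w' : ι → 𝕜} {x : ℝ}
    (hv : HasDerivAt v v' x) (hw : HasDerivAt w w' x) :
    HasDerivAt (fun u => v u ⬝ᵥ w u) (v' ⬝ᵥ w x + v x ⬝ᵥ w') x := by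
  simp only [dotProduct, ← Finset.sum_add_distrib]
  exact HasDerivAt.fun_sum fun i _ => (hasDerivAt_pi.1 hv i).mul (hasDerivAt_pi.1 hw i)

theorem dotProduct_eq_zero_of_eventually_dotProduct_self_eq {v : ℝ → ι → 𝕜} {v' : ι → 𝕜} {x : ℝ}
    {c : 𝕜} (hv : HasDerivAt v v' x) (hc : ∀ᶠ u in 𝓝 x, v u ⬝ᵥ v u = c) : v x ⬝ᵥ v' = 0 := by
  have h := (hasDerivAt_dotProduct hv hv).unique
    ((hasDerivAt_const x c).congr_of_eventuallyEq hc)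
  rwa [dotProduct_comm, ← two_mul, mul_eq_zero_iff_left two_ne_zero] at h

/-- A `C²` map of `U × V` into the quadric `n ⬝ᵥ n = 1` whose two partial derivatives are null
vectors. The self-dual part of the Gauss map of a minimal Lorentzian surface in null coordinates
is such a map. -/
structure IsNullQuadricMap (U V : Set ℝ) (N : ℝ → ℝ → ι → 𝕜) : Prop where
  contDiffOn : ContDiffOn ℝ 2 (uncurry N) (U ×ˢ V)
  dotProduct_self : ∀ s ∈ U, ∀ t ∈ V, N s t ⬝ᵥ N s t = 1
  pds_dotProduct_self : ∀ s ∈ U, ∀ t ∈ V, pds N s t ⬝ᵥ pds N s t = 0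
  pdt_dotProduct_self : ∀ s ∈ U, ∀ t ∈ V, pdt N s t ⬝ᵥ pdt N s t = 0

namespace IsNullQuadricMap

variable {U V : Set ℝ} {N : ℝ → ℝ → ι → 𝕜} {q G f : ℝ → ℝ → 𝕜} {s t : ℝ}

theorem dotProduct_pds (hN : IsNullQuadricMap U V N) (hU : IsOpen U) (hV : IsOpen V)
    (hs : s ∈ U) (ht : t ∈ V) : N s t ⬝ᵥ pds N s t = 0 :=
  dotProduct_eq_zero_of_eventually_dotProduct_self_eq (v := fun u => N u t)
    (hasDerivAt_pds hU hV hN.contDiffOn two_ne_zero hs ht)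
    ((hU.eventually_mem hs).mono fun u hu => hN.dotProduct_self u hu t ht)

theorem dotProduct_pdt (hN : IsNullQuadricMap U V N) (hU : IsOpen U) (hV : IsOpen V)
    (hs : s ∈ U) (ht : t ∈ V) : N s t ⬝ᵥ pdt N s t = 0 :=
  dotProduct_eq_zero_of_eventually_dotProduct_self_eq
    (hasDerivAt_pdt hU hV hN.contDiffOn two_ne_zero hs ht)
    ((hV.eventually_mem ht).mono fun u hu => hN.dotProduct_self s hs u hu)

theorem pds_dotProduct_pdt (hN : IsNullQuadricMap U V N) (hU : IsOpen U) (hV : IsOpen V)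
    (hs : s ∈ U) (ht : t ∈ V) : pds N s t ⬝ᵥ pdt N s t = -(N s t ⬝ᵥ pds (pdt N) s t) := by
  have hNs := hasDerivAt_pds hU hV hN.contDiffOn two_ne_zero hs ht
  have hNst := hasDerivAt_pds hU hV
    (contDiffOn_pdt hU hV hN.contDiffOn one_add_one_eq_two.le) one_ne_zero hs ht
  have hconst : HasDerivAt (fun u => N u t ⬝ᵥ pdt N u t) 0 s :=
    (hasDerivAt_const s 0).congr_of_eventuallyEq <|
      (hU.eventually_mem hs).mono fun u hu => hN.dotProduct_pdt hU hV hu ht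
  exact eq_neg_of_add_eq_zero_left ((hasDerivAt_dotProduct hNs hNst).unique hconst)

section Biharmonic

variable (hN : IsNullQuadricMap U V N) (hU : IsOpen U) (hV : IsOpen V)
  (hG : ContDiffOn ℝ 2 (uncurry G) (U ×ˢ V))
  (hNG : ∀ s ∈ U, ∀ t ∈ V, q s t • pds (pdt N) s t = G s t • N s t)
  (hGf : ∀ s ∈ U, ∀ t ∈ V,
    q s t • pds (pdt fun s t => G s t • N s t) s t = f s t • G s t • N s t)
include hN hU hV

include hNG in
theorem mul_pds_dotProduct_pdt (hs : s ∈ U) (ht : t ∈ V) :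
    q s t * (pds N s t ⬝ᵥ pdt N s t) = -G s t := by
  rw [hN.pds_dotProduct_pdt hU hV hs ht, mul_neg, ← smul_eq_mul, ← dotProduct_smul, hNG s hs t ht,
    dotProduct_smul, hN.dotProduct_self s hs t ht, smul_eq_mul, mul_one]

include hG hNG hGf

theorem tangential_eq_normal (hs : s ∈ U) (ht : t ∈ V) :
    q s t • (pds G s t • pdt N s t + pdt G s t • pds N s t) =
      (f s t * G s t - G s t ^ 2 - q s t * pds (pdt G) s t) • N s t := by
  have h := hGf s hs t ht
  rw [pds_pdt_smul hU hV hG hN.contDiffOn hs ht, smul_add, smul_add, smul_comm (q s t) (G s t),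
    hNG s hs t ht] at h
  linear_combination (norm := module) h

theorem eigenvalue_mul_pds_eq_zero (hs : s ∈ U) (ht : t ∈ V) : G s t * pds G s t = 0 := by
  have h := congrArg (· ⬝ᵥ pds N s t) (hN.tangential_eq_normal hU hV hG hNG hGf hs ht)
  simp only [smul_dotProduct, add_dotProduct, smul_eq_mul, hN.dotProduct_pds hU hV hs ht,
    hN.pds_dotProduct_self s hs t ht, dotProduct_comm (pdt N s t)] at h
  linear_combination -h + pds G s t * hN.mul_pds_dotProduct_pdt hU hV hNG hs ht

theorem eigenvalue_mul_pdt_eq_zero (hs : s ∈ U) (ht : t ∈ V) : G s t * pdt G s t = 0 := by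
  have h := congrArg (· ⬝ᵥ pdt N s t) (hN.tangential_eq_normal hU hV hG hNG hGf hs ht)
  simp only [smul_dotProduct, add_dotProduct, smul_eq_mul, hN.dotProduct_pdt hU hV hs ht,
    hN.pdt_dotProduct_self s hs t ht] at h
  linear_combination -h + pdt G s t * hN.mul_pds_dotProduct_pdt hU hV hNG hs ht

theorem exists_eigenvalue_eq (hU' : IsPreconnected U) (hV' : IsPreconnected V) :
    ∃ c, ∀ s ∈ U, ∀ t ∈ V, G s t = c :=
  exists_eq_of_mul_pds_mul_pdt_eq_zero hU hV hU' hV' (hG.of_le one_le_two)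
    (fun _ hs _ ht => hN.eigenvalue_mul_pds_eq_zero hU hV hG hNG hGf hs ht)
    (fun _ hs _ ht => hN.eigenvalue_mul_pdt_eq_zero hU hV hG hNG hGf hs ht)

theorem eigenvalue_eq_zero_or_eq (hU' : IsPreconnected U) (hV' : IsPreconnected V) (hs : s ∈ U)
    (ht : t ∈ V) : G s t = 0 ∨ G s t = f s t := by
  obtain ⟨c, hc⟩ := hN.exists_eigenvalue_eq hU hV hG hNG hGf hU' hV'
  have hGst : pds (pdt G) s t = 0 := by
    rw [pds_pdt_congr (y := fun _ _ => c) hU hV hc hs ht]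
    simp [pds, pdt]
  have h := congrArg (N s t ⬝ᵥ ·) (hN.tangential_eq_normal hU hV hG hNG hGf hs ht)
  simp only [dotProduct_smul, dotProduct_add, smul_eq_mul,
    hN.dotProduct_pds hU hV hs ht, hN.dotProduct_pdt hU hV hs ht, hN.dotProduct_self s hs t ht,
    hGst] at h
  rw [← sub_eq_zero (b := f s t), ← mul_eq_zero]
  linear_combination h

end Biharmonic

end IsNullQuadricMap

end NullQuadricMap

section MinkowskiForm

theorem B4_comm (v w : Fin 4 → ℝ) : B4 v w = B4 w v := by
  simp only [B4]; ring

theorem B4_add_smul_left (v w z : Fin 4 → ℝ) (c : ℝ) :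
    B4 (v + c • w) z = B4 v z + c * B4 w z := by
  simp only [B4, Pi.add_apply, Pi.smul_apply, smul_eq_mul]; ring

theorem B4_add_smul_right (v w z : Fin 4 → ℝ) (c : ℝ) :
    B4 z (v + c • w) = B4 z v + c * B4 z w := by
  simp only [B4, Pi.add_apply, Pi.smul_apply, smul_eq_mul]; ring

theorem wedge_add_smul_left (v w z : Fin 4 → ℝ) (c : ℝ) :
    wedge (v + c • w) z = wedge v z + c • wedge w z := by
  ext i j; simp only [wedge, Pi.add_apply, Pi.smul_apply, smul_eq_mul]; ring

theorem wedge_smul_right (v w : Fin 4 → ℝ) (c : ℝ) : wedge v (c • w) = c • wedge v w := by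
  ext i j; simp only [wedge, Pi.smul_apply, smul_eq_mul]; ring

theorem wedge_anticomm (v w : Fin 4 → ℝ) : wedge v w = -wedge w v := by
  ext i j; simp only [wedge, Pi.neg_apply]; ring

theorem B4_zero_right (v : Fin 4 → ℝ) : B4 v 0 = 0 := by
  simp [B4]

theorem wedge_zero_right (v : Fin 4 → ℝ) : wedge v 0 = 0 := by
  ext i j; simp [wedge]

theorem hasDerivAt_B4 {v w : ℝ → Fin 4 → ℝ} {v' w' : Fin 4 → ℝ} {x : ℝ}
    (hv : HasDerivAt v v' x) (hw : HasDerivAt w w' x) :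
    HasDerivAt (fun u => B4 (v u) (w u)) (B4 v' (w x) + B4 (v x) w') x := by
  have h (i : Fin 4) := (hasDerivAt_pi.1 hv i).mul (hasDerivAt_pi.1 hw i)
  refine ((((h 0).neg.add (h 1)).add (h 2)).add (h 3)).congr_deriv ?_
  simp only [B4]; ring

theorem hasDerivAt_wedge {v w : ℝ → Fin 4 → ℝ} {v' w' : Fin 4 → ℝ} {x : ℝ}
    (hv : HasDerivAt v v' x) (hw : HasDerivAt w w' x) :
    HasDerivAt (fun u => wedge (v u) (w u)) (wedge v' (w x) + wedge (v x) w') x := by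
  have h (i j : Fin 4) := (hasDerivAt_pi.1 hv i).mul (hasDerivAt_pi.1 hw j)
  refine hasDerivAt_pi.2 fun i => hasDerivAt_pi.2 fun j => ((h i j).sub (h j i)).congr_deriv ?_
  simp only [wedge, Pi.add_apply]; ring

theorem B4_eq_zero_of_eventually_B4_self_eq {v : ℝ → Fin 4 → ℝ} {v' : Fin 4 → ℝ} {x c : ℝ}
    (hv : HasDerivAt v v' x) (hc : ∀ᶠ u in 𝓝 x, B4 (v u) (v u) = c) : B4 v' (v x) = 0 := by
  have h := (hasDerivAt_B4 hv hv).unique ((hasDerivAt_const x c).congr_of_eventuallyEq hc)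
  rwa [B4_comm (v x), ← two_mul, mul_eq_zero_iff_left two_ne_zero] at h

variable {X : Type*} [NormedAddCommGroup X] [NormedSpace ℝ X] {S : Set X} {n : WithTop ℕ∞}
  {v w : X → Fin 4 → ℝ}

theorem contDiffOn_B4 (hv : ContDiffOn ℝ n v S) (hw : ContDiffOn ℝ n w S) :
    ContDiffOn ℝ n (fun x => B4 (v x) (w x)) S := by
  unfold B4; fun_prop

theorem contDiffOn_wedge (hv : ContDiffOn ℝ n v S) (hw : ContDiffOn ℝ n w S) :
    ContDiffOn ℝ n (fun x => wedge (v x) (w x)) S := by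
  unfold wedge; fun_prop

end MinkowskiForm

section SelfDual

/-- The self-dual part of a bivector `ξ` of Minkowski space (its Riemann–Silberstein vector
`E + iH`), in the coordinates `E = (ξ₀₁, ξ₀₂, ξ₀₃)` and `H = (ξ₃₂, ξ₁₃, ξ₂₁)`. It identifies
`Λ²(ℝ⁴)` with `ℂ³`, the Hodge star becoming multiplication by `i` up to sign. -/
def selfDualPart : (Fin 4 → Fin 4 → ℝ) →L[ℝ] (Fin 3 → ℂ) :=
  LinearMap.toContinuousLinearMap
    { toFun := fun ξ => ![⟨ξ 0 1, ξ 3 2⟩, ⟨ξ 0 2, ξ 1 3⟩, ⟨ξ 0 3, ξ 2 1⟩]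
      map_add' := fun ξ ζ => by ext i; fin_cases i <;> rfl
      map_smul' := fun c ξ => by
        ext i; fin_cases i <;> simp [Complex.ext_iff] }

theorem selfDualPart_apply (ξ : Fin 4 → Fin 4 → ℝ) :
    selfDualPart ξ = ![⟨ξ 0 1, ξ 3 2⟩, ⟨ξ 0 2, ξ 1 3⟩, ⟨ξ 0 3, ξ 2 1⟩] := rfl

theorem eq_zero_of_selfDualPart_eq_zero {ξ : Fin 4 → Fin 4 → ℝ} (hξ : ∀ i j, ξ i j = -ξ j i)
    (h : selfDualPart ξ = 0) : ξ = 0 := by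
  have hdiag (i : Fin 4) : ξ i i = 0 := self_eq_neg.1 (hξ i i)
  obtain ⟨h01, h32⟩ := Complex.ext_iff.1 (congrFun h 0)
  obtain ⟨h02, h13⟩ := Complex.ext_iff.1 (congrFun h 1)
  obtain ⟨h03, h21⟩ := Complex.ext_iff.1 (congrFun h 2)
  simp only [selfDualPart_apply, Matrix.cons_val, Pi.zero_apply, Complex.zero_re,
    Complex.zero_im] at h01 h32 h02 h13 h03 h21
  have hzero : ∀ i j, ξ i j = 0 := by
    simp only [Fin.forall_fin_succ]
    grind
  exact funext₂ hzero

variable (u v w z : Fin 4 → ℝ)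

theorem re_selfDualPart_wedge_dotProduct :
    (selfDualPart (wedge u v) ⬝ᵥ selfDualPart (wedge w z)).re =
      B4 u z * B4 v w - B4 u w * B4 v z := by
  simp only [selfDualPart_apply, wedge, B4, dotProduct_cons, head_cons, tail_cons,
    dotProduct_of_isEmpty, add_zero, Complex.add_re, Complex.mul_re]
  ring

theorem selfDualPart_wedge_dotProduct_self :
    selfDualPart (wedge u v) ⬝ᵥ selfDualPart (wedge u v) =
      (B4 u v ^ 2 - B4 u u * B4 v v : ℝ) := by
  apply Complex.ext
  · rw [re_selfDualPart_wedge_dotProduct, Complex.ofReal_re, B4_comm v u, sq]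
  · rw [Complex.ofReal_im]
    simp only [selfDualPart_apply, wedge, dotProduct_cons, head_cons, tail_cons,
      dotProduct_of_isEmpty, add_zero, Complex.add_im, Complex.mul_im]
    ring

theorem selfDualPart_wedge_cross :
    selfDualPart (wedge u v) ⨯₃ selfDualPart (wedge w z) =
      Complex.I • selfDualPart (B4 v w • wedge u z - B4 v z • wedge u w
        + (B4 u z • wedge v w - B4 u w • wedge v z)) := by
  ext i
  fin_cases i <;> apply Complex.ext <;>
  · simp only [selfDualPart_apply, cross_apply, wedge, B4, Pi.smul_apply, Pi.add_apply,
      Pi.sub_apply, smul_eq_mul, Fin.zero_eta, Fin.mk_one, Fin.reduceFinMk, cons_val,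
      Complex.sub_re, Complex.sub_im, Complex.mul_re, Complex.mul_im, Complex.I_re, Complex.I_im]
    ring

theorem eq_smul_of_cross_eq_zero {R : Type*} [CommRing R] {x y : Fin 3 → R}
    (hxy : x ⨯₃ y = 0) (hy : y ⬝ᵥ y = 1) : x = (x ⬝ᵥ y) • y := by
  have h := cross_cross_eq_smul_sub_smul x y y
  rw [hxy, map_zero, LinearMap.zero_apply, hy, one_smul, eq_comm, sub_eq_zero] at h
  exact h.symm

end SelfDual

section MinimalSurface

variable {α β : ℝ → Fin 4 → ℝ} {s t : ℝ}

theorem msq_swap (α β : ℝ → Fin 4 → ℝ) (s t : ℝ) : msq β α t s = msq α β s t := by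
  simp only [msq, B4_comm (deriv β t)]

theorem gaussMap_swap (α β : ℝ → Fin 4 → ℝ) (s t : ℝ) :
    gaussMap β α t s = -gaussMap α β s t := by
  rw [gaussMap, gaussMap, msq_swap, wedge_anticomm, smul_neg]

theorem eta1_swap (α β : ℝ → Fin 4 → ℝ) (s t : ℝ) : eta1 β α t s = eta2 α β s t := by
  simp only [eta1, eta2, B4_comm (deriv β t)]

theorem eta1_eq (α β : ℝ → Fin 4 → ℝ) (s t : ℝ) :
    eta1 α β s t = deriv (deriv α) s
      + (B4 (deriv (deriv α) s) (deriv β t) / msq α β s t) • deriv α s := by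
  rw [eta1, msq, div_neg, neg_smul, sub_eq_add_neg]

theorem eta2_eq (α β : ℝ → Fin 4 → ℝ) (s t : ℝ) :
    eta2 α β s t = deriv (deriv β) t
      + (B4 (deriv α s) (deriv (deriv β) t) / msq α β s t) • deriv β t := by
  rw [← eta1_swap, eta1_eq, msq_swap, B4_comm]

theorem B4_eta1_right (hm : msq α β s t ≠ 0) : B4 (eta1 α β s t) (deriv β t) = 0 := by
  have hB : B4 (deriv α s) (deriv β t) = -msq α β s t := (neg_neg _).symm
  rw [eta1_eq, B4_add_smul_left, hB]
  field_simp
  ring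

theorem B4_eta2_left (hm : msq α β s t ≠ 0) : B4 (eta2 α β s t) (deriv α s) = 0 := by
  rw [← eta1_swap]
  exact B4_eta1_right (by rwa [msq_swap])

theorem B4_eta1_left (hnull : B4 (deriv α s) (deriv α s) = 0)
    (hacc : B4 (deriv (deriv α) s) (deriv α s) = 0) : B4 (eta1 α β s t) (deriv α s) = 0 := by
  rw [eta1_eq, B4_add_smul_left, hacc, hnull, mul_zero, add_zero]

theorem B4_eta2_right (hnull : B4 (deriv β t) (deriv β t) = 0)
    (hacc : B4 (deriv (deriv β) t) (deriv β t) = 0) : B4 (eta2 α β s t) (deriv β t) = 0 := by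
  rw [← eta1_swap]
  exact B4_eta1_left hnull hacc

theorem hasDerivAt_msq_fst (hα : DifferentiableAt ℝ (deriv α) s) :
    HasDerivAt (fun u => msq α β u t) (-B4 (deriv (deriv α) s) (deriv β t)) s := by
  refine (hasDerivAt_B4 hα.hasDerivAt (hasDerivAt_const s (deriv β t))).neg.congr_deriv ?_
  rw [B4_zero_right, add_zero]

theorem hasDerivAt_gaussMap_fst (hα : DifferentiableAt ℝ (deriv α) s) (hm : msq α β s t ≠ 0) :
    HasDerivAt (fun u => gaussMap α β u t)
      ((1 / msq α β s t) • wedge (eta1 α β s t) (deriv β t)) s := by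
  simp only [gaussMap, one_div]
  refine (((hasDerivAt_msq_fst hα).inv hm).smul
    (hasDerivAt_wedge hα.hasDerivAt (hasDerivAt_const s (deriv β t)))).congr_deriv ?_
  rw [eta1_eq, wedge_add_smul_left, wedge_zero_right, add_zero, Pi.inv_apply]
  match_scalars <;> field_simp

theorem hasDerivAt_gaussMap_snd (hβ : DifferentiableAt ℝ (deriv β) t) (hm : msq α β s t ≠ 0) :
    HasDerivAt (fun u => gaussMap α β s u)
      ((1 / msq α β s t) • wedge (deriv α s) (eta2 α β s t)) t := by
  have h := (hasDerivAt_gaussMap_fst (α := β) (β := α) (t := s) hβ (by rwa [msq_swap])).neg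
  rw [msq_swap, eta1_swap, ← smul_neg, ← wedge_anticomm] at h
  exact h.congr_of_eventuallyEq (.of_forall fun u => gaussMap_swap β α u s)

theorem hasDerivAt_eta2_fst (hα : DifferentiableAt ℝ (deriv α) s) (hm : msq α β s t ≠ 0) :
    HasDerivAt (fun u => eta2 α β u t)
      ((B4 (eta1 α β s t) (eta2 α β s t) / msq α β s t) • deriv β t) s := by
  have hβ'' := hasDerivAt_B4 hα.hasDerivAt (hasDerivAt_const s (deriv (deriv β) t))
  simp only [eta2_eq]
  refine (((hβ''.div (hasDerivAt_msq_fst hα) hm).smul_const (deriv β t)).const_add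
    (deriv (deriv β) t)).congr_deriv ?_
  congr 1
  rw [B4_zero_right, B4_add_smul_right, B4_eta1_right hm, eta1_eq, B4_add_smul_left]
  field_simp
  ring

theorem pds_pdt_gaussMap (hα : DifferentiableAt ℝ (deriv α) s)
    (hβ : DifferentiableAt ℝ (deriv β) t) (hm : msq α β s t ≠ 0) :
    pds (pdt (gaussMap α β)) s t = (1 / msq α β s t) •
      (wedge (eta1 α β s t) (eta2 α β s t)
        + B4 (eta1 α β s t) (eta2 α β s t) • gaussMap α β s t) := by
  have hm_near : ∀ᶠ u in 𝓝 s, msq α β u t ≠ 0 :=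
    (hasDerivAt_msq_fst hα).continuousAt.eventually_ne hm
  have hpdt : (fun u => pdt (gaussMap α β) u t) =ᶠ[𝓝 s]
      fun u => (msq α β u t)⁻¹ • wedge (deriv α u) (eta2 α β u t) :=
    hm_near.mono fun u hu =>
      (hasDerivAt_gaussMap_snd hβ hu).deriv.trans (by rw [one_div])
  have hderiv := ((hasDerivAt_msq_fst hα).inv hm).smul
    (hasDerivAt_wedge hα.hasDerivAt (hasDerivAt_eta2_fst hα hm))
  refine (hderiv.congr_of_eventuallyEq hpdt).deriv.trans ?_
  rw [eta1_eq, wedge_add_smul_left, ← eta1_eq, wedge_smul_right, gaussMap, Pi.inv_apply]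
  match_scalars <;> field_simp

/-- The Gaussian curvature `K` of the surface `α(s) + β(t)` in null coordinates. -/
def gaussCurvature (α β : ℝ → Fin 4 → ℝ) (s t : ℝ) : ℝ :=
  B4 (eta1 α β s t) (eta2 α β s t) / msq α β s t ^ 2

/-- The normal curvature `κ` of the surface `α(s) + β(t)` in null coordinates, i.e. the component
of `η₁ ∧ η₂` along the Hodge dual of the Gauss map, divided by `m⁴`. Its sign depends on the
orientation fixed by `selfDualPart`. -/
def normalCurvature (α β : ℝ → Fin 4 → ℝ) (s t : ℝ) : ℝ :=
  (selfDualPart (wedge (eta1 α β s t) (eta2 α β s t)) ⬝ᵥ selfDualPart (gaussMap α β s t)).im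
    / msq α β s t ^ 2

/-- The complex curvature `K + iκ` of the surface `α(s) + β(t)` in null coordinates. -/
def complexCurvature (α β : ℝ → Fin 4 → ℝ) (s t : ℝ) : ℂ :=
  ⟨gaussCurvature α β s t, normalCurvature α β s t⟩

/-- The curves `α` and `β` are null with `B(α', β') ≠ 0`, so that `α(s) + β(t)` is a minimal
Lorentzian surface in null coordinates on `I₁ × I₂`. Both signs of `B(α', β')` are allowed, as
reversing the parameter of `β` changes it; class `C⁴` gives `Δ²ν` its classical meaning. -/
structure IsMinimalNullPair (I₁ I₂ : Set ℝ) (α β : ℝ → Fin 4 → ℝ) : Prop where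
  isOpen_left : IsOpen I₁
  isOpen_right : IsOpen I₂
  contDiffOn_left : ContDiffOn ℝ 4 α I₁
  contDiffOn_right : ContDiffOn ℝ 4 β I₂
  null_left : ∀ s ∈ I₁, B4 (deriv α s) (deriv α s) = 0
  null_right : ∀ t ∈ I₂, B4 (deriv β t) (deriv β t) = 0
  msq_ne_zero : ∀ s ∈ I₁, ∀ t ∈ I₂, msq α β s t ≠ 0

namespace IsMinimalNullPair

variable {I₁ I₂ : Set ℝ} (h : IsMinimalNullPair I₁ I₂ α β)
include h

theorem swap : IsMinimalNullPair I₂ I₁ β α where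
  isOpen_left := h.isOpen_right
  isOpen_right := h.isOpen_left
  contDiffOn_left := h.contDiffOn_right
  contDiffOn_right := h.contDiffOn_left
  null_left := h.null_right
  null_right := h.null_left
  msq_ne_zero t ht s hs := by rw [msq_swap]; exact h.msq_ne_zero s hs t ht

section Regularity

theorem contDiffOn_deriv_left : ContDiffOn ℝ 3 (deriv α) I₁ :=
  h.contDiffOn_left.deriv_of_isOpen h.isOpen_left (by norm_num)

theorem contDiffOn_deriv_deriv_left : ContDiffOn ℝ 2 (deriv (deriv α)) I₁ :=
  h.contDiffOn_deriv_left.deriv_of_isOpen h.isOpen_left (by norm_num)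

theorem differentiableAt_deriv_left (hs : s ∈ I₁) : DifferentiableAt ℝ (deriv α) s :=
  (h.contDiffOn_deriv_left.contDiffAt (h.isOpen_left.mem_nhds hs)).differentiableAt three_ne_zero

theorem contDiffOn_deriv_fst : ContDiffOn ℝ 2 (fun z : ℝ × ℝ => deriv α z.1) (I₁ ×ˢ I₂) :=
  (h.contDiffOn_deriv_left.of_le (by norm_num)).comp contDiffOn_fst fun _ hz => hz.1

theorem contDiffOn_deriv_snd : ContDiffOn ℝ 2 (fun z : ℝ × ℝ => deriv β z.2) (I₁ ×ˢ I₂) :=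
  (h.swap.contDiffOn_deriv_left.of_le (by norm_num)).comp contDiffOn_snd fun _ hz => hz.2

theorem contDiffOn_deriv_deriv_fst :
    ContDiffOn ℝ 2 (fun z : ℝ × ℝ => deriv (deriv α) z.1) (I₁ ×ˢ I₂) :=
  h.contDiffOn_deriv_deriv_left.comp contDiffOn_fst fun _ hz => hz.1

theorem contDiffOn_deriv_deriv_snd :
    ContDiffOn ℝ 2 (fun z : ℝ × ℝ => deriv (deriv β) z.2) (I₁ ×ˢ I₂) :=
  h.swap.contDiffOn_deriv_deriv_left.comp contDiffOn_snd fun _ hz => hz.2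

theorem contDiffOn_msq : ContDiffOn ℝ 2 (uncurry (msq α β)) (I₁ ×ˢ I₂) :=
  (contDiffOn_B4 h.contDiffOn_deriv_fst h.contDiffOn_deriv_snd).neg

theorem contDiffOn_eta1 : ContDiffOn ℝ 2 (uncurry (eta1 α β)) (I₁ ×ˢ I₂) :=
  (h.contDiffOn_deriv_deriv_fst.add <|
    ((contDiffOn_B4 h.contDiffOn_deriv_deriv_fst h.contDiffOn_deriv_snd).div h.contDiffOn_msq
      fun z hz => h.msq_ne_zero z.1 hz.1 z.2 hz.2).smul h.contDiffOn_deriv_fst).congr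
    fun z _ => eta1_eq α β z.1 z.2

theorem contDiffOn_eta2 : ContDiffOn ℝ 2 (uncurry (eta2 α β)) (I₁ ×ˢ I₂) :=
  (h.contDiffOn_deriv_deriv_snd.add <|
    ((contDiffOn_B4 h.contDiffOn_deriv_fst h.contDiffOn_deriv_deriv_snd).div h.contDiffOn_msq
      fun z hz => h.msq_ne_zero z.1 hz.1 z.2 hz.2).smul h.contDiffOn_deriv_snd).congr
    fun z _ => eta2_eq α β z.1 z.2

theorem contDiffOn_gaussMap :
    ContDiffOn ℝ 2 (uncurry (gaussMap α β)) (I₁ ×ˢ I₂) :=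
  (contDiffOn_const.div h.contDiffOn_msq fun z hz => h.msq_ne_zero z.1 hz.1 z.2 hz.2).smul
    (contDiffOn_wedge h.contDiffOn_deriv_fst h.contDiffOn_deriv_snd)

theorem contDiffOn_gaussCurvature :
    ContDiffOn ℝ 2 (uncurry (gaussCurvature α β)) (I₁ ×ˢ I₂) :=
  (contDiffOn_B4 h.contDiffOn_eta1 h.contDiffOn_eta2).div (h.contDiffOn_msq.pow 2)
    fun z hz => pow_ne_zero 2 (h.msq_ne_zero z.1 hz.1 z.2 hz.2)

theorem contDiffOn_selfDualPart_gaussMap :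
    ContDiffOn ℝ 2 (fun z : ℝ × ℝ => selfDualPart (gaussMap α β z.1 z.2)) (I₁ ×ˢ I₂) :=
  selfDualPart.contDiff.comp_contDiffOn h.contDiffOn_gaussMap

theorem contDiffOn_normalCurvature :
    ContDiffOn ℝ 2 (uncurry (normalCurvature α β)) (I₁ ×ˢ I₂) := by
  have hdot : ContDiffOn ℝ 2 (fun z : ℝ × ℝ =>
      selfDualPart (wedge (eta1 α β z.1 z.2) (eta2 α β z.1 z.2)) ⬝ᵥ
        selfDualPart (gaussMap α β z.1 z.2)) (I₁ ×ˢ I₂) :=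
    contDiffOn_dotProduct (selfDualPart.contDiff.comp_contDiffOn
      (contDiffOn_wedge h.contDiffOn_eta1 h.contDiffOn_eta2)) h.contDiffOn_selfDualPart_gaussMap
  exact (Complex.imCLM.contDiff.comp_contDiffOn hdot).div (h.contDiffOn_msq.pow 2)
    fun z hz => pow_ne_zero 2 (h.msq_ne_zero z.1 hz.1 z.2 hz.2)

theorem contDiffOn_complexCurvature :
    ContDiffOn ℝ 2 (uncurry (complexCurvature α β)) (I₁ ×ˢ I₂) :=
  Complex.equivRealProdCLM.symm.contDiff.comp_contDiffOn
    (h.contDiffOn_gaussCurvature.prodMk h.contDiffOn_normalCurvature)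

end Regularity

theorem B4_eta1_left (hs : s ∈ I₁) : B4 (eta1 α β s t) (deriv α s) = 0 :=
  _root_.B4_eta1_left (h.null_left s hs) <|
    B4_eq_zero_of_eventually_B4_self_eq (h.differentiableAt_deriv_left hs).hasDerivAt <|
      (h.isOpen_left.eventually_mem hs).mono h.null_left

theorem B4_eta2_right (ht : t ∈ I₂) : B4 (eta2 α β s t) (deriv β t) = 0 := by
  rw [← eta1_swap]
  exact h.swap.B4_eta1_left ht

theorem lap_gaussMap (hs : s ∈ I₁) (ht : t ∈ I₂) :
    lap α β (gaussMap α β) s t =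
      (2 / msq α β s t ^ 2) • wedge (eta1 α β s t) (eta2 α β s t)
        + (2 * gaussCurvature α β s t) • gaussMap α β s t := by
  rw [lap, pds_pdt_gaussMap (h.differentiableAt_deriv_left hs)
    (h.swap.differentiableAt_deriv_left ht) (h.msq_ne_zero s hs t ht), gaussCurvature]
  match_scalars <;> field_simp

theorem selfDualPart_gaussMap_dotProduct_self (hs : s ∈ I₁) (ht : t ∈ I₂) :
    selfDualPart (gaussMap α β s t) ⬝ᵥ selfDualPart (gaussMap α β s t) = 1 := by
  have hm := h.msq_ne_zero s hs t ht
  have hB : B4 (deriv α s) (deriv β t) = -msq α β s t := (neg_neg _).symm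
  rw [gaussMap, map_smul, smul_dotProduct, dotProduct_smul, selfDualPart_wedge_dotProduct_self,
    h.null_left s hs, hB, smul_smul, Complex.real_smul, ← Complex.ofReal_mul, Complex.ofReal_eq_one]
  field_simp
  ring

theorem selfDualPart_wedge_eta1_eta2 (hs : s ∈ I₁) (ht : t ∈ I₂) :
    selfDualPart (wedge (eta1 α β s t) (eta2 α β s t)) =
      (msq α β s t ^ 2 * normalCurvature α β s t * Complex.I) •
        selfDualPart (gaussMap α β s t) := by
  have hm := h.msq_ne_zero s hs t ht
  have hcross : selfDualPart (wedge (eta1 α β s t) (eta2 α β s t)) ⨯₃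
      selfDualPart (gaussMap α β s t) = 0 := by
    simp only [gaussMap, map_smul, LinearMap.map_smul_of_tower, selfDualPart_wedge_cross,
      h.B4_eta1_left hs, B4_eta1_right hm, B4_eta2_left hm, h.B4_eta2_right ht, zero_smul,
      sub_zero, add_zero, map_zero, smul_zero]
  have hre : (selfDualPart (wedge (eta1 α β s t) (eta2 α β s t)) ⬝ᵥ
      selfDualPart (gaussMap α β s t)).re = 0 := by
    rw [gaussMap, map_smul, dotProduct_smul, Complex.smul_re, re_selfDualPart_wedge_dotProduct,
      h.B4_eta1_left hs, B4_eta1_right hm, zero_mul, zero_mul, sub_zero, smul_zero]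
  rw [eq_smul_of_cross_eq_zero hcross (h.selfDualPart_gaussMap_dotProduct_self hs ht)]
  congr 1
  apply Complex.ext
  · simp [hre, ← Complex.ofReal_pow]
  · simp [normalCurvature, ← Complex.ofReal_pow, mul_div_cancel₀, hm]

theorem selfDualPart_lap_gaussMap (hs : s ∈ I₁) (ht : t ∈ I₂) :
    selfDualPart (lap α β (gaussMap α β) s t) =
      (2 * complexCurvature α β s t) • selfDualPart (gaussMap α β s t) := by
  have hm : (msq α β s t : ℂ) ≠ 0 := Complex.ofReal_ne_zero.2 (h.msq_ne_zero s hs t ht)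
  rw [h.lap_gaussMap hs ht, map_add, map_smul, map_smul, h.selfDualPart_wedge_eta1_eta2 hs ht,
    complexCurvature, Complex.mk_eq_add_mul_I]
  ext i
  simp only [Pi.add_apply, Pi.smul_apply, smul_eq_mul, Complex.real_smul, Complex.ofReal_div,
    Complex.ofReal_mul, Complex.ofReal_pow, Complex.ofReal_ofNat]
  field_simp
  ring

theorem selfDualPart_lap {ξ : ℝ → ℝ → Fin 4 → Fin 4 → ℝ}
    (hξ : ContDiffOn ℝ 2 (uncurry ξ) (I₁ ×ˢ I₂)) (hs : s ∈ I₁) (ht : t ∈ I₂) :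
    selfDualPart (lap α β ξ s t) =
      (2 / msq α β s t : ℂ) • pds (pdt fun s t => selfDualPart (ξ s t)) s t := by
  rw [lap, map_smul, pds_pdt_clm_comp h.isOpen_left h.isOpen_right selfDualPart hξ hs ht,
    ← Complex.coe_smul]
  norm_cast

theorem contDiffOn_lap_gaussMap :
    ContDiffOn ℝ 2 (uncurry (lap α β (gaussMap α β))) (I₁ ×ˢ I₂) :=
  (((contDiffOn_const.div (h.contDiffOn_msq.pow 2)
    fun z hz => pow_ne_zero 2 (h.msq_ne_zero z.1 hz.1 z.2 hz.2)).smul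
      (contDiffOn_wedge h.contDiffOn_eta1 h.contDiffOn_eta2)).add
    ((contDiffOn_const.mul h.contDiffOn_gaussCurvature).smul h.contDiffOn_gaussMap)).congr
      fun _ hz => h.lap_gaussMap hz.1 hz.2

theorem pds_selfDualPart_gaussMap (hs : s ∈ I₁) (ht : t ∈ I₂) :
    pds (fun s t => selfDualPart (gaussMap α β s t)) s t =
      (1 / msq α β s t) • selfDualPart (wedge (eta1 α β s t) (deriv β t)) := by
  rw [← map_smul]
  exact (selfDualPart.hasFDerivAt.comp_hasDerivAt s <| hasDerivAt_gaussMap_fst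
    (h.differentiableAt_deriv_left hs) (h.msq_ne_zero s hs t ht)).deriv

theorem pdt_selfDualPart_gaussMap (hs : s ∈ I₁) (ht : t ∈ I₂) :
    pdt (fun s t => selfDualPart (gaussMap α β s t)) s t =
      (1 / msq α β s t) • selfDualPart (wedge (deriv α s) (eta2 α β s t)) := by
  rw [← map_smul]
  exact (selfDualPart.hasFDerivAt.comp_hasDerivAt t <| hasDerivAt_gaussMap_snd
    (h.swap.differentiableAt_deriv_left ht) (h.msq_ne_zero s hs t ht)).deriv

theorem isNullQuadricMap :
    IsNullQuadricMap I₁ I₂ fun s t => selfDualPart (gaussMap α β s t) where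
  contDiffOn := h.contDiffOn_selfDualPart_gaussMap
  dotProduct_self _ hs _ ht := h.selfDualPart_gaussMap_dotProduct_self hs ht
  pds_dotProduct_self s hs t ht := by
    rw [h.pds_selfDualPart_gaussMap hs ht, smul_dotProduct, dotProduct_smul,
      selfDualPart_wedge_dotProduct_self, B4_eta1_right (h.msq_ne_zero s hs t ht),
      h.null_right t ht, mul_zero, zero_pow two_ne_zero, sub_zero, Complex.ofReal_zero, smul_zero,
      smul_zero]
  pdt_dotProduct_self s hs t ht := by
    rw [h.pdt_selfDualPart_gaussMap hs ht, smul_dotProduct, dotProduct_smul,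
      selfDualPart_wedge_dotProduct_self, B4_comm (deriv α s),
      B4_eta2_left (h.msq_ne_zero s hs t ht), h.null_left s hs, zero_mul, zero_pow two_ne_zero,
      sub_zero, Complex.ofReal_zero, smul_zero, smul_zero]

theorem wedge_eta1_eta2_eq_zero (hs : s ∈ I₁) (ht : t ∈ I₂) (hκ : normalCurvature α β s t = 0) :
    wedge (eta1 α β s t) (eta2 α β s t) = 0 := by
  refine eq_zero_of_selfDualPart_eq_zero (fun i j => (neg_sub _ _).symm) ?_
  rw [h.selfDualPart_wedge_eta1_eta2 hs ht, hκ, Complex.ofReal_zero, mul_zero, zero_mul, zero_smul]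

section Biharmonic

variable {f : ℝ → ℝ → ℝ} (hmain : ∀ s ∈ I₁, ∀ t ∈ I₂,
  lap α β (lap α β (gaussMap α β)) s t = f s t • lap α β (gaussMap α β) s t)

theorem smul_pds_pdt_selfDualPart_gaussMap (hs : s ∈ I₁) (ht : t ∈ I₂) :
    (2 / msq α β s t : ℂ) • pds (pdt fun s t => selfDualPart (gaussMap α β s t)) s t =
      (2 * complexCurvature α β s t) • selfDualPart (gaussMap α β s t) := by
  rw [← h.selfDualPart_lap h.contDiffOn_gaussMap hs ht, h.selfDualPart_lap_gaussMap hs ht]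

include hmain

theorem smul_pds_pdt_complexCurvature_smul (hs : s ∈ I₁) (ht : t ∈ I₂) :
    (2 / msq α β s t : ℂ) • pds (pdt fun s t =>
      (2 * complexCurvature α β s t) • selfDualPart (gaussMap α β s t)) s t =
      (f s t : ℂ) • (2 * complexCurvature α β s t) • selfDualPart (gaussMap α β s t) := by
  rw [← pds_pdt_congr h.isOpen_left h.isOpen_right
      (fun s hs t ht => h.selfDualPart_lap_gaussMap hs ht) hs ht,
    ← h.selfDualPart_lap h.contDiffOn_lap_gaussMap hs ht, hmain s hs t ht, map_smul,
    Complex.coe_smul, h.selfDualPart_lap_gaussMap hs ht]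

theorem exists_complexCurvature_eq (hI₁ : IsPreconnected I₁) (hI₂ : IsPreconnected I₂) :
    ∃ c, ∀ s ∈ I₁, ∀ t ∈ I₂, complexCurvature α β s t = c := by
  obtain ⟨c, hc⟩ := h.isNullQuadricMap.exists_eigenvalue_eq h.isOpen_left h.isOpen_right
    (contDiffOn_const.mul h.contDiffOn_complexCurvature)
    (fun _ hs _ ht => h.smul_pds_pdt_selfDualPart_gaussMap hs ht)
    (fun _ hs _ ht => h.smul_pds_pdt_complexCurvature_smul hmain hs ht) hI₁ hI₂
  exact ⟨c / 2, fun s hs t ht => eq_div_of_mul_eq two_ne_zero <| by rw [mul_comm, hc s hs t ht]⟩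

theorem normalCurvature_eq_zero (hI₁ : IsPreconnected I₁) (hI₂ : IsPreconnected I₂)
    (hs : s ∈ I₁) (ht : t ∈ I₂) : normalCurvature α β s t = 0 := by
  have hreal : 2 * complexCurvature α β s t = 0 ∨ 2 * complexCurvature α β s t = f s t :=
    h.isNullQuadricMap.eigenvalue_eq_zero_or_eq h.isOpen_left h.isOpen_right
      (contDiffOn_const.mul h.contDiffOn_complexCurvature)
      (fun _ hs _ ht => h.smul_pds_pdt_selfDualPart_gaussMap hs ht)
      (fun _ hs _ ht => h.smul_pds_pdt_complexCurvature_smul hmain hs ht) hI₁ hI₂ hs ht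
  have him : (2 * complexCurvature α β s t).im = 0 := by
    obtain hzero | hf := hreal
    · rw [hzero, Complex.zero_im]
    · rw [hf, Complex.ofReal_im]
  simpa [complexCurvature] using him

end Biharmonic

end IsMinimalNullPair

end MinimalSurface

theorem biharmonic_type_equation_implies_one_type_general {I₁ I₂ : Set ℝ} {α β : ℝ → Fin 4 → ℝ}
    (h : IsMinimalNullPair I₁ I₂ α β) (hI₁ : IsPreconnected I₁) (hI₂ : IsPreconnected I₂)
    {f : ℝ → ℝ → ℝ}
    (hmain : ∀ s ∈ I₁, ∀ t ∈ I₂,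
      lap α β (lap α β (gaussMap α β)) s t = f s t • lap α β (gaussMap α β) s t) :
    (∀ s ∈ I₁, ∀ t ∈ I₂, wedge (eta1 α β s t) (eta2 α β s t) = 0) ∧
    ∃ K : ℝ,
      (∀ s ∈ I₁, ∀ t ∈ I₂, B4 (eta1 α β s t) (eta2 α β s t) / (msq α β s t) ^ 2 = K) ∧
      (∀ s ∈ I₁, ∀ t ∈ I₂, lap α β (gaussMap α β) s t = (2 * K) • gaussMap α β s t) := by
  have hflat : ∀ s ∈ I₁, ∀ t ∈ I₂, wedge (eta1 α β s t) (eta2 α β s t) = 0 := fun s hs t ht =>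
    h.wedge_eta1_eta2_eq_zero hs ht (h.normalCurvature_eq_zero hmain hI₁ hI₂ hs ht)
  obtain ⟨c, hc⟩ := h.exists_complexCurvature_eq hmain hI₁ hI₂
  have hK : ∀ s ∈ I₁, ∀ t ∈ I₂, gaussCurvature α β s t = c.re := fun s hs t ht =>
    congrArg Complex.re (hc s hs t ht)
  refine ⟨hflat, c.re, hK, fun s hs t ht => ?_⟩
  rw [h.lap_gaussMap hs ht, hflat s hs t ht, hK s hs t ht, smul_zero, zero_add]

/-- Theorem 4.2 (explicit form): if `Δ²ν = f·Δν` for a smooth function `f`, then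
`η₁ ∧ η₂ ≡ 0`, the Gaussian curvature `K = B(η₁,η₂)/m⁴` is a constant, and
`Δν = 2K·ν` everywhere, so the Gauss map is of 1-type. -/
theorem biharmonic_type_equation_implies_one_type
    (I₁ I₂ : Set ℝ) (hI₁ : IsOpen I₁) (hI₂ : IsOpen I₂)
    (hI₁' : I₁.OrdConnected) (hI₂' : I₂.OrdConnected)
    (α β : ℝ → Fin 4 → ℝ)
    (hα : ContDiffOn ℝ (⊤ : ℕ∞) α I₁) (hβ : ContDiffOn ℝ (⊤ : ℕ∞) β I₂)
    (hαnull : ∀ s ∈ I₁, B4 (deriv α s) (deriv α s) = 0)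
    (hβnull : ∀ t ∈ I₂, B4 (deriv β t) (deriv β t) = 0)
    (hneg : ∀ s ∈ I₁, ∀ t ∈ I₂, B4 (deriv α s) (deriv β t) < 0)
    (f : ℝ → ℝ → ℝ) (hf : ContDiffOn ℝ (⊤ : ℕ∞) (Function.uncurry f) (I₁ ×ˢ I₂))
    (hmain : ∀ s ∈ I₁, ∀ t ∈ I₂,
      lap α β (lap α β (gaussMap α β)) s t = f s t • lap α β (gaussMap α β) s t) :
    (∀ s ∈ I₁, ∀ t ∈ I₂, wedge (eta1 α β s t) (eta2 α β s t) = 0) ∧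
    ∃ K : ℝ,
      (∀ s ∈ I₁, ∀ t ∈ I₂, B4 (eta1 α β s t) (eta2 α β s t) / (msq α β s t) ^ 2 = K) ∧
      (∀ s ∈ I₁, ∀ t ∈ I₂, lap α β (gaussMap α β) s t = (2 * K) • gaussMap α β s t) :=
  biharmonic_type_equation_implies_one_type_general
    ⟨hI₁, hI₂, contDiffOn_infty.1 hα 4, contDiffOn_infty.1 hβ 4, hαnull,
      hβnull, fun s hs t ht => neg_ne_zero.2 (hneg s hs t ht).ne⟩
    hI₁'.isPreconnected hI₂'.isPreconnected hmain
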